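/- arXiv:1508.06061 — 8 statements merged into one kernel-verified Lean document; each statement's English description precedes it below -/
import Mathlib

section
/- Let X be a real random variable whose distribution is unimodal with mode m (for some m ∈ ℝ), with mean 0 and variance 1. Then for every k ≥ √(5/3), the probability that X ≥ k is at most 4/(9(1+k²)). (One-sided Vysochanskij–Petunin inequality, large-threshold branch.) -/
open MeasureTheory

/-- A probability measure on `ℝ` is unimodal with mode `m` if it is absolutely continuous with
respect to Lebesgue measure with a density that is nondecreasing on `(-∞, m]` and nonincreasing
on `[m, ∞)`. -/
def IsUnimodalWithMode (P : Measure ℝ) (m : ℝ) : Prop :=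
  ∃ f : ℝ → ENNReal, P = volume.withDensity f ∧
    MonotoneOn f (Set.Iic m) ∧ AntitoneOn f (Set.Ici m)


lemma superlevel_ordConnected {f : ℝ → ENNReal} {m : ℝ} (h1 : MonotoneOn f (Set.Iic m))
    (h2 : AntitoneOn f (Set.Ici m)) (t : ENNReal) : ({x | t < f x} : Set ℝ).OrdConnected := by
  refine ⟨fun x hx y hy z hz => ?_⟩
  simp only [Set.mem_ofPred_eq] at *
  rcases le_total z m with h | h
  · exact hx.trans_le (h1 (hz.1.trans h) h hz.1)
  · exact hy.trans_le (h2 h (h.trans hz.2) hz.2)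

lemma superlevel_mem {f : ℝ → ENNReal} {m : ℝ} (h1 : MonotoneOn f (Set.Iic m))
    (h2 : AntitoneOn f (Set.Ici m)) (t : ENNReal) {x : ℝ} (hx : t < f x) : t < f m := by
  rcases le_total x m with h | h
  · exact hx.trans_le (h1 h (le_refl m) h)
  · exact hx.trans_le (h2 (le_refl m) h h)

lemma unimodal_measurable {f : ℝ → ENNReal} {m : ℝ} (h1 : MonotoneOn f (Set.Iic m))
    (h2 : AntitoneOn f (Set.Ici m)) : Measurable f := by
  refine measurable_of_Ioi fun t => ?_
  exact (superlevel_ordConnected h1 h2 t).measurableSet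

lemma ordConnected_le {S : Set ℝ} (hS : S.OrdConnected) {m : ℝ} (hm : m ∈ S)
    (hfin : volume S ≠ ⊤) {h1 h2 : ℝ → ENNReal}
    (H : ∀ A B, A ≤ m → m ≤ B → ∫⁻ x in Set.Ioc A B, h2 x ≤ ∫⁻ x in Set.Ioc A B, h1 x) :
    ∫⁻ x in S, h2 x ≤ ∫⁻ x in S, h1 x := by
  have hba : BddAbove S := by
    by_contra hb
    apply hfin
    have : Set.Ici m ⊆ S := fun x hx => by
      obtain ⟨y, hy, hxy⟩ := not_bddAbove_iff.1 hb x
      exact hS.out hm hy ⟨hx, hxy.le⟩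
    exact top_le_iff.1 (by simpa using measure_mono (μ := volume) this)
  have hbb : BddBelow S := by
    by_contra hb
    apply hfin
    have : Set.Iic m ⊆ S := fun x hx => by
      obtain ⟨y, hy, hxy⟩ := not_bddBelow_iff.1 hb x
      exact hS.out hy hm ⟨hxy.le, hx⟩
    exact top_le_iff.1 (by simpa using measure_mono (μ := volume) this)
  have hae : S =ᵐ[volume] Set.Ioc (sInf S) (sSup S) := by
    have e1 : S ⊆ Set.Icc (sInf S) (sSup S) := fun x hx => ⟨csInf_le hbb hx, le_csSup hba hx⟩
    have e2 : Set.Ioo (sInf S) (sSup S) ⊆ S := fun x hx => by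
      obtain ⟨y, hy, hyx⟩ := exists_lt_of_csInf_lt ⟨m, hm⟩ hx.1
      obtain ⟨z, hz, hxz⟩ := exists_lt_of_lt_csSup ⟨m, hm⟩ hx.2
      exact hS.out hy hz ⟨hyx.le, hxz.le⟩
    have e3 : Set.Icc (sInf S) (sSup S) =ᵐ[volume] Set.Ioc (sInf S) (sSup S) := Ioc_ae_eq_Icc.symm
    have e4 : Set.Ioo (sInf S) (sSup S) =ᵐ[volume] Set.Ioc (sInf S) (sSup S) := Ioo_ae_eq_Ioc
    exact Filter.EventuallyLE.antisymm (e1.eventuallyLE.trans e3.le)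
      (e4.symm.le.trans e2.eventuallyLE)
  rw [Measure.restrict_congr_set hae]
  exact H _ _ (csInf_le hbb hm) (le_csSup hba hm)

lemma unimodal_key {f : ℝ → ENNReal} {m : ℝ} (hf1 : MonotoneOn f (Set.Iic m))
    (hf2 : AntitoneOn f (Set.Ici m)) (hfin : ∫⁻ x, f x ≠ ⊤) {h1 h2 : ℝ → ENNReal}
    (m1 : Measurable h1) (m2 : Measurable h2)
    (H : ∀ A B, A ≤ m → m ≤ B → ∫⁻ x in Set.Ioc A B, h2 x ≤ ∫⁻ x in Set.Ioc A B, h1 x) :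
    ∫⁻ x, f x * h2 x ≤ ∫⁻ x, f x * h1 x := by
  have hm := unimodal_measurable hf1 hf2
  have hft : ∀ᵐ x, f x < ⊤ := ae_lt_top hm hfin
  have key : ∀ h : ℝ → ENNReal, Measurable h → ∫⁻ x, f x * h x =
      ∫⁻ t in Set.Ioi (0:ℝ), ∫⁻ x in {x | ENNReal.ofReal t < f x}, h x := by
    intro h hh
    have e1 : ∫⁻ x, f x * h x = ∫⁻ x, f x ∂(volume.withDensity h) := by
      rw [lintegral_withDensity_eq_lintegral_mul _ hh hm]
      simp [mul_comm]
    have hft' : ∀ᵐ x ∂(volume.withDensity h), f x < ⊤ :=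
      (withDensity_absolutelyContinuous volume h).ae_le hft
    have e2 : ∫⁻ x, f x ∂(volume.withDensity h)
        = ∫⁻ x, ENNReal.ofReal (f x).toReal ∂(volume.withDensity h) := by
      refine lintegral_congr_ae (hft'.mono fun x hx => ?_)
      simp [ENNReal.ofReal_toReal hx.ne]
    rw [e1, e2, lintegral_eq_lintegral_meas_lt _ (Filter.Eventually.of_forall fun x => by simp)
      hm.ennreal_toReal.aemeasurable]
    refine setLIntegral_congr_fun measurableSet_Ioi fun t ht => ?_
    have e3 : (volume.withDensity h) {a | t < (f a).toReal}
        = (volume.withDensity h) {a | ENNReal.ofReal t < f a} := by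
      refine measure_congr ?_
      filter_upwards [hft'] with x hx
      apply propext
      exact (ENNReal.ofReal_lt_iff_lt_toReal (le_of_lt ht) hx.ne).symm
    rw [e3, withDensity_apply _ (superlevel_ordConnected hf1 hf2 _).measurableSet]
  rw [key h1 m1, key h2 m2]
  refine setLIntegral_mono' measurableSet_Ioi fun t ht => ?_
  rcases Set.eq_empty_or_nonempty {x | ENNReal.ofReal t < f x} with he | ⟨x, hx⟩
  · simp [he]
  refine ordConnected_le (superlevel_ordConnected hf1 hf2 _)
    (superlevel_mem hf1 hf2 _ hx) ?_ H
  have ht0 : ENNReal.ofReal t ≠ 0 := by simpa using ht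
  have h3 := mul_meas_ge_le_lintegral (μ := volume) hm (ENNReal.ofReal t)
  intro htop
  have h4 : volume {x | ENNReal.ofReal t ≤ f x} = ⊤ :=
    top_le_iff.1 (htop ▸ measure_mono (fun x (hx : ENNReal.ofReal t < f x) => (hx.le : ENNReal.ofReal t ≤ f x)))
  rw [h4, ENNReal.mul_top ht0] at h3
  exact hfin (top_le_iff.1 h3)

/-- dual certificate -/
lemma certificate (m : ℝ) : ∃ a c : ℝ, 0 ≤ a ∧ 0 ≤ c ∧
    (∀ s : ℝ, 0 ≤ s → s ≤ 3 / 8 → a * s - c ≤ 4 / 9 * s) ∧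
    ∀ A B : ℝ, A ≤ m → m ≤ B → c * (B - A) + max 0 (B - max A 1) ≤ a * (B ^ 3 - A ^ 3) / 3 := by
  rcases le_total m 0 with h0 | h0
  · refine ⟨4 / 9, 0, by norm_num, le_rfl, fun s _ _ => by linarith, fun A B hA hB => ?_⟩
    have hA3 : A ^ 3 ≤ B ^ 3 := (Odd.strictMono_pow (by decide : Odd 3)).monotone (hA.trans hB)
    have hA0 : A ≤ 0 := hA.trans h0
    rw [max_eq_right (by linarith : A ≤ 1)]
    have : A ^ 3 ≤ 0 := (Odd.pow_nonpos_iff (by decide)).2 hA0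
    rcases le_total B 1 with h | h
    · rw [max_eq_left (by linarith)]; linarith
    · rw [max_eq_right (by linarith)]
      nlinarith [mul_nonneg (sq_nonneg (2 * B - 3)) (by linarith : 0 ≤ B + 3)]
  rcases le_total m 1 with h1 | h1
  · have hd : 0 < 9 - 6 * m ^ 2 := by nlinarith
    obtain ⟨a, ha⟩ : ∃ a, a = 4 / (9 - 6 * m ^ 2) := ⟨_, rfl⟩
    have had : a * (9 - 6 * m ^ 2) = 4 := by rw [ha]; field_simp
    have hap : 0 < a := by rw [ha]; positivity
    refine ⟨a, a * m ^ 2 / 4, hap.le, by positivity, fun s hs hs' => ?_, fun A B hA hB => ?_⟩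
    · nlinarith [mul_nonneg (mul_nonneg hap.le (sq_nonneg m)) (by linarith : 0 ≤ 3 / 8 - s)]
    · rw [max_eq_right (by linarith : A ≤ 1)]
      have hAp : 0 ≤ (m - A) * ((m + 2 * A) ^ 2) := mul_nonneg (by linarith) (sq_nonneg _)
      have hBp : 0 ≤ (B - m) * ((m + 2 * B) ^ 2) := mul_nonneg (by linarith) (sq_nonneg _)
      rcases le_total B 1 with h | h
      · rw [max_eq_left (by linarith)]
        nlinarith [mul_nonneg hap.le hAp, mul_nonneg hap.le hBp]
      · rw [max_eq_right (by linarith)]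
        have hpoly : (27 - 18 * m ^ 2) * (B - 1) ≤ (B - m) * ((m + 2 * B) ^ 2) := by
          rcases le_total 19 (15 * B) with h15 | h15
          · nlinarith [mul_nonneg (sq_nonneg (2 * B - 3)) (by linarith : 0 ≤ B + 3),
              mul_nonneg (sq_nonneg m) (by linarith : 0 ≤ 15 * B - 18 - m)]
          · have b1 : 0 ≤ (1 + m) * (19 - 15 * B) + m ^ 2 := by
              have := mul_nonneg (by linarith : 0 ≤ 1 + m) (by linarith : 0 ≤ 19 - 15 * B)
              positivity
            nlinarith [mul_nonneg (sq_nonneg (B - 1)) (by linarith : 0 ≤ B + 2),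
              mul_nonneg (by linarith : 0 ≤ 1 - m) b1]
        have := mul_le_mul_of_nonneg_left hpoly hap.le
        have e : a * ((27 - 18 * m ^ 2) * (B - 1)) = 12 * (B - 1) := by
          linear_combination (3 * (B - 1)) * had
        nlinarith [mul_nonneg hap.le hAp]
  · refine ⟨4 / 3, 1 / 3, by norm_num, by norm_num, fun s _ _ => by linarith,
      fun A B hA hB => ?_⟩
    have hB1 : 1 ≤ B := h1.trans hB
    rcases le_total A 1 with h | h
    · rw [max_eq_right h, max_eq_right (by linarith)]
      nlinarith [mul_nonneg (sq_nonneg (B - 1)) (by linarith : 0 ≤ B + 2),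
        mul_nonneg (sq_nonneg (2 * A + 1)) (by linarith : 0 ≤ 1 - A)]
    · rw [max_eq_left h, max_eq_right (by linarith)]
      nlinarith [mul_nonneg (by linarith : 0 ≤ B - A) (by nlinarith : 0 ≤ B^2+A*B+A^2 - 3)]

lemma cube_integral (a α r A B : ℝ) (ha : 0 ≤ a) (hr : 0 < r) (hAB : A ≤ B) :
    ∫⁻ x in Set.Ioc A B, ENNReal.ofReal (a * ((x - α) / r) ^ 2) =
      ENNReal.ofReal (r * (a * (((B - α) / r) ^ 3 - ((A - α) / r) ^ 3) / 3)) := by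
  rw [← ofReal_integral_eq_lintegral_ofReal]
  · congr 1
    rw [← intervalIntegral.integral_of_le hAB]
    rw [intervalIntegral.integral_eq_sub_of_hasDerivAt
      (f := fun x => r * (a * ((x - α) / r) ^ 3 / 3))]
    · ring
    · intro x _
      have := (((((hasDerivAt_id x).sub_const α).div_const r).pow 3).const_mul a).div_const 3
        |>.const_mul r
      refine this.congr_deriv ?_
      simp
      field_simp
    · exact Continuous.intervalIntegrable (by fun_prop) _ _
  · exact (Continuous.integrableOn_Icc (by fun_prop)).mono_set Set.Ioc_subset_Icc_self
  · exact Filter.Eventually.of_forall fun x => by positivity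

/-- **One-sided Vysochanskij–Petunin inequality (large-threshold branch).** If `X` is a real
random variable (given by its law `P`) whose distribution is unimodal with some mode `m`, with
mean `0` and variance `1`, then for every `k ≥ √(5/3)`, `P[X ≥ k] ≤ 4 / (9 (1 + k²))`. -/
theorem one_sided_vysochanskij_petunin_large
    (P : Measure ℝ) [IsProbabilityMeasure P] (m : ℝ)
    (hU : IsUnimodalWithMode P m)
    (hInt : Integrable (fun x => x ^ 2) P)
    (hmean : (∫ x, x ∂P) = 0) (hvar : (∫ x, x ^ 2 ∂P) = 1)
    (k : ℝ) (hk : Real.sqrt (5 / 3) ≤ k) :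
    (P (Set.Ici k)).toReal ≤ 4 / (9 * (1 + k ^ 2)) := by
  have hk0 : 0 < k := (Real.sqrt_pos.2 (by norm_num)).trans_le hk
  have hk2 : 5 / 3 ≤ k ^ 2 := (Real.sqrt_le_left hk0.le).1 hk
  obtain ⟨f, hP, hf1, hf2⟩ := hU
  obtain ⟨α, hα⟩ : ∃ α, α = -1 / k := ⟨_, rfl⟩
  obtain ⟨r, hr⟩ : ∃ r, r = k - α := ⟨_, rfl⟩
  have hr' : r = k + 1 / k := by rw [hr, hα]; ring
  have hr0 : 0 < r := by rw [hr']; positivity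
  obtain ⟨a, c, ha, hc, hs, hAB⟩ := certificate ((m - α) / r)
  have hfm := unimodal_measurable hf1 hf2
  have hfin : ∫⁻ x, f x ≠ ⊤ := by
    have : P Set.univ = ∫⁻ x, f x := by rw [hP]; simp
    rw [← this]; simp
  have m1 : Measurable fun x : ℝ => ENNReal.ofReal (a * ((x - α) / r) ^ 2) := by fun_prop
  have m2 : Measurable fun x : ℝ => ENNReal.ofReal c + (Set.Ici k).indicator 1 x :=
    Measurable.add (f := fun _ => ENNReal.ofReal c) measurable_const
      (measurable_one.indicator measurableSet_Ici)
  have main := unimodal_key hf1 hf2 hfin m1 m2 (by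
    intro A B hA hB
    rw [cube_integral a α r A B ha hr0 (hA.trans hB), lintegral_add_left measurable_const,
      lintegral_indicator_one measurableSet_Ici, Measure.restrict_apply measurableSet_Ici]
    have hv : volume (Set.Ici k ∩ Set.Ioc A B) ≤ ENNReal.ofReal (max 0 (B - max A k)) := by
      refine (measure_mono (t := Set.Icc (max A k) B) ?_).trans ?_
      · rintro x ⟨h1, h2⟩
        exact ⟨max_le h2.1.le h1, h2.2⟩
      · rw [Real.volume_Icc]
        exact ENNReal.ofReal_le_ofReal (le_max_right _ _)
    refine (add_le_add_right hv _).trans ?_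
    simp only [lintegral_const, Measure.restrict_apply_univ, Real.volume_Ioc]
    rw [← ENNReal.ofReal_mul hc, ← ENNReal.ofReal_add
      (mul_nonneg hc (by linarith)) (le_max_left _ _)]
    apply ENNReal.ofReal_le_ofReal
    have h := hAB ((A - α) / r) ((B - α) / r) (by gcongr) (by gcongr)
    have h' := mul_le_mul_of_nonneg_left h hr0.le
    refine le_trans (le_of_eq ?_) h'
    have e1 : (1 : ℝ) = (k - α) / r := by rw [hr]; rw [div_self]; rw [← hr]; exact hr0.ne'
    rw [e1, max_div_div_right hr0.le, max_sub_sub_right, mul_add,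
      mul_max_of_nonneg _ _ hr0.le]
    congr 1
    · field_simp; ring
    · congr 1
      · simp
      · field_simp; ring)
  have conv : ∀ h : ℝ → ENNReal, Measurable h → ∫⁻ x, f x * h x = ∫⁻ x, h x ∂P := by
    intro h hh
    rw [hP, lintegral_withDensity_eq_lintegral_mul _ hfm hh]; rfl
  rw [conv _ m1, conv _ m2, lintegral_add_left measurable_const,
    lintegral_indicator_one measurableSet_Ici, lintegral_const, measure_univ, mul_one] at main
  have hI1 : Integrable (fun x : ℝ => x) P :=
    ((memLp_two_iff_integrable_sq aestronglyMeasurable_id).2 hInt).integrable one_le_two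
  have hfe : (fun x : ℝ => a * ((x - α) / r) ^ 2) = fun x =>
      a / r ^ 2 * x ^ 2 + (-2 * a * α / r ^ 2) * x + a * α ^ 2 / r ^ 2 := by
    funext x; field_simp; ring
  have hi2 : Integrable (fun x : ℝ => a / r ^ 2 * x ^ 2 + (-2 * a * α / r ^ 2) * x) P :=
    (hInt.const_mul _).add (hI1.const_mul _)
  have hmom : ∫ x, a * ((x - α) / r) ^ 2 ∂P = a * (1 / (1 + k ^ 2)) := by
    rw [hfe, integral_add hi2 (integrable_const _),
      integral_add (hInt.const_mul _) (hI1.const_mul _), integral_const_mul, integral_const_mul,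
      hmean, hvar, hr', hα]
    simp
    field_simp
    ring
  rw [← ofReal_integral_eq_lintegral_ofReal (by rw [hfe]; exact hi2.add (integrable_const _))
    (Filter.Eventually.of_forall fun x => by positivity), hmom] at main
  have h5 := ENNReal.toReal_mono ENNReal.ofReal_ne_top main
  rw [ENNReal.toReal_add ENNReal.ofReal_ne_top (measure_ne_top _ _), ENNReal.toReal_ofReal hc,
    ENNReal.toReal_ofReal (by positivity)] at h5
  have h6 := hs (1 / (1 + k ^ 2)) (by positivity) (by
    rw [div_le_div_iff₀ (by positivity) (by norm_num)]; linarith)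
  have h7 : 4 / (9 * (1 + k ^ 2)) = 4 / 9 * (1 / (1 + k ^ 2)) := by field_simp
  rw [h7]; linarith
end

section
/- Let X be a real random variable whose distribution is unimodal with mode m (for some m ∈ ℝ), with mean 0 and variance 1. Then for every k with 0 ≤ k < √(5/3), the probability that X ≥ k is at most 1 - (4/3)·k²/(1+k²). (One-sided Vysochanskij–Petunin inequality, small-threshold branch.) -/
open MeasureTheory

theorem lint_neg_le_iff {μ : Measure ℝ} {h : ℝ → ℝ} (hi : Integrable h μ) :
    0 ≤ ∫ x, h x ∂μ ↔
      ∫⁻ x, ENNReal.ofReal (-h x) ∂μ ≤ ∫⁻ x, ENNReal.ofReal (h x) ∂μ := by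
  rw [integral_eq_lintegral_pos_part_sub_lintegral_neg_part hi, sub_nonneg]
  have h1 : ∫⁻ x, ENNReal.ofReal (h x) ∂μ ≠ ⊤ := hi.lintegral_lt_top.ne
  have h2 : ∫⁻ x, ENNReal.ofReal (-h x) ∂μ ≠ ⊤ := hi.neg.lintegral_lt_top.ne
  exact ENNReal.toReal_le_toReal h2 h1

/-- Level sets of a unimodal density are intervals. -/
theorem ordConnected_level {f : ℝ → ENNReal} {m : ℝ}
    (h1 : MonotoneOn f (Set.Iic m)) (h2 : AntitoneOn f (Set.Ici m)) (t : ENNReal) :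
    Set.OrdConnected {x | t < f x} := by
  refine ⟨fun x hx y hy z hz => ?_⟩
  simp only [Set.mem_ofPred_eq] at *
  rcases le_total z m with h | h
  · exact hx.trans_le (h1 (hz.1.trans h) h hz.1)
  · exact hy.trans_le (h2 h (h.trans hz.2) hz.2)

theorem mem_level {f : ℝ → ENNReal} {m : ℝ}
    (h1 : MonotoneOn f (Set.Iic m)) (h2 : AntitoneOn f (Set.Ici m)) (t : ENNReal)
    (x : ℝ) (hx : t < f x) : t < f m := by
  rcases le_total x m with h | h
  · exact hx.trans_le (h1 h Set.self_mem_Iic h)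
  · exact hx.trans_le (h2 Set.self_mem_Ici h h)

/-- An interval of finite length containing `m` is a.e. some `Ioc a b`. -/
theorem interval_ae {S : Set ℝ} {m : ℝ} (hS : S.OrdConnected) (hm : m ∈ S)
    (hv : volume S ≠ ⊤) : ∃ a b : ℝ, a ≤ m ∧ m ≤ b ∧ S =ᵐ[volume] Set.Ioc a b := by
  have hA : BddAbove S := by
    refine ⟨m + (volume S).toReal, fun x hx => ?_⟩
    rcases le_total x m with h | h
    · have := ENNReal.toReal_nonneg (a := volume S); linarith
    have h3 : Set.Icc m x ⊆ S := hS.out hm hx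
    have h4 := ENNReal.toReal_mono hv (measure_mono (μ := volume) h3)
    rw [Real.volume_Icc, ENNReal.toReal_ofReal (by linarith)] at h4
    linarith
  have hB : BddBelow S := by
    refine ⟨m - (volume S).toReal, fun x hx => ?_⟩
    rcases le_total m x with h | h
    · have := ENNReal.toReal_nonneg (a := volume S); linarith
    have h3 : Set.Icc x m ⊆ S := hS.out hx hm
    have h4 := ENNReal.toReal_mono hv (measure_mono (μ := volume) h3)
    rw [Real.volume_Icc, ENNReal.toReal_ofReal (by linarith)] at h4
    linarith
  refine ⟨sInf S, sSup S, csInf_le hB hm, le_csSup hA hm, ?_⟩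
  have h5 : Set.Ioo (sInf S) (sSup S) ⊆ S := by
    intro x hx
    obtain ⟨y, hy, hyx⟩ := exists_lt_of_csInf_lt ⟨m, hm⟩ hx.1
    obtain ⟨z, hz, hxz⟩ := exists_lt_of_lt_csSup ⟨m, hm⟩ hx.2
    exact hS.out hy hz ⟨hyx.le, hxz.le⟩
  have h6 : S ⊆ Set.Icc (sInf S) (sSup S) := fun x hx => ⟨csInf_le hB hx, le_csSup hA hx⟩
  have h7 : Set.Ioc (sInf S) (sSup S) ≤ᵐ[volume] S :=
    Ioo_ae_eq_Ioc.symm.le.trans h5.eventuallyLE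
  have h8 : S ≤ᵐ[volume] Set.Ioc (sInf S) (sSup S) :=
    (h6.eventuallyLE).trans Ioc_ae_eq_Icc.symm.le
  exact h8.antisymm h7

/-- Layer-cake comparison. -/
theorem layer (f : ℝ → ENNReal) (m : ℝ) [IsProbabilityMeasure (volume.withDensity f)]
    (h1 : MonotoneOn f (Set.Iic m)) (h2 : AntitoneOn f (Set.Ici m))
    (h : ℝ → ℝ) (hh : Measurable h) (hi : Integrable h (volume.withDensity f))
    (hab : ∀ a b, a ≤ m → m ≤ b → IntegrableOn h (Set.Ioc a b) ∧ 0 ≤ ∫ x in Set.Ioc a b, h x) :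
    0 ≤ ∫ x, h x ∂(volume.withDensity f) := by
  have hf : Measurable f :=
    measurable_of_Ioi fun t => (ordConnected_level h1 h2 t).measurableSet
  have hf1 : ∫⁻ x, f x = 1 := by
    have := measure_univ (μ := volume.withDensity f)
    rwa [withDensity_apply _ MeasurableSet.univ, Measure.restrict_univ] at this
  have hfin : ∀ᵐ x, f x < ⊤ := ae_lt_top hf (by rw [hf1]; simp)
  have key : ∀ g : ℝ → ENNReal, Measurable g → ∫⁻ x, g x ∂(volume.withDensity f) =
      ∫⁻ t in Set.Ioi (0 : ℝ), ∫⁻ x in {x | ENNReal.ofReal t < f x}, g x := by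
    intro g hg
    have e1 : ∫⁻ x, g x ∂(volume.withDensity f)
        = ∫⁻ x, ENNReal.ofReal (f x).toReal ∂(volume.withDensity g) := by
      rw [lintegral_withDensity_eq_lintegral_mul _ hf hg,
        lintegral_withDensity_eq_lintegral_mul _ hg (by fun_prop)]
      apply lintegral_congr_ae
      filter_upwards [hfin] with x hx
      simp only [Pi.mul_apply, ENNReal.ofReal_toReal hx.ne]
      rw [mul_comm]
    rw [e1, lintegral_eq_lintegral_meas_lt _ (by filter_upwards with x; simp)
      (by fun_prop)]
    apply setLIntegral_congr_fun measurableSet_Ioi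
    intro t ht
    simp only
    have hms : MeasurableSet {x | ENNReal.ofReal t < f x} :=
      (ordConnected_level h1 h2 _).measurableSet
    rw [← withDensity_apply _ hms]
    apply measure_congr
    have : ∀ᵐ x ∂(volume.withDensity g), f x < ⊤ :=
      (withDensity_absolutelyContinuous _ _).ae_le hfin
    filter_upwards [this] with x hx
    apply propext
    change t < (f x).toReal ↔ ENNReal.ofReal t < f x
    exact (ENNReal.ofReal_lt_iff_lt_toReal (le_of_lt ht) hx.ne).symm
  rw [lint_neg_le_iff hi, key _ (by fun_prop), key _ (by fun_prop)]
  apply setLIntegral_mono' measurableSet_Ioi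
  intro t ht
  have ht' : (0 : ℝ) < t := ht
  by_cases hm : ENNReal.ofReal t < f m
  · have hv : volume {x | ENNReal.ofReal t < f x} ≠ ⊤ := by
      have h3 := mul_meas_ge_le_lintegral (μ := volume) hf (ENNReal.ofReal t)
      rw [hf1] at h3
      have h4 : volume {x | ENNReal.ofReal t ≤ f x} ≠ ⊤ := by
        intro h5
        rw [h5, ENNReal.mul_top (by simpa using ht')] at h3
        simp at h3
      have h6 : {x | ENNReal.ofReal t < f x} ⊆ {x | ENNReal.ofReal t ≤ f x} :=
        fun x (hx : ENNReal.ofReal t < f x) => le_of_lt hx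
      exact measure_ne_top_of_subset h6 h4
    obtain ⟨a, b, ha, hb, hS⟩ := interval_ae (ordConnected_level h1 h2 _) hm hv
    rw [setLIntegral_congr hS, setLIntegral_congr hS]
    exact (lint_neg_le_iff (hab a b ha hb).1).1 (hab a b ha hb).2
  · have : {x | ENNReal.ofReal t < f x} = ∅ := by
      ext x
      simp only [Set.mem_ofPred_eq, Set.mem_empty_iff_false, iff_false]
      exact fun hx => hm (mem_level h1 h2 _ x hx)
    rw [this]; simp

theorem cert (P : Measure ℝ) [IsProbabilityMeasure P] (m : ℝ)
    (hU : IsUnimodalWithMode P m)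
    (hInt : Integrable (fun x => x ^ 2) P)
    (hmean : (∫ x, x ∂P) = 0) (hvar : (∫ x, x ^ 2 ∂P) = 1)
    (k α β γ : ℝ)
    (hpos : ∀ y, 0 ≤ y → max (m + y) k - max m k ≤ α * y + β * y ^ 2 / 2 + γ * y ^ 3 / 3)
    (hneg : ∀ y, y ≤ 0 → α * y + β * y ^ 2 / 2 + γ * y ^ 3 / 3 ≤ max (m + y) k - max m k) :
    (P (Set.Ici k)).toReal ≤ α - β * m + γ * (1 + m ^ 2) := by
  obtain ⟨f, rfl, h1, h2⟩ := hU
  set P := volume.withDensity f with hP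
  have hac : P ≪ volume := withDensity_absolutelyContinuous _ _
  have hIci : P (Set.Ici k) = P (Set.Ioi k) :=
    (measure_congr (hac.ae_le Ioi_ae_eq_Ici)).symm
  have hx : Integrable (fun x : ℝ => x) P := by
    have h3 : MemLp (fun x : ℝ => x) 2 P :=
      (memLp_two_iff_integrable_sq (by fun_prop)).2 hInt
    exact h3.integrable (by norm_num)
  set q : ℝ → ℝ := fun x => (α - β * m + γ * m ^ 2) + (β - 2 * γ * m) * x + γ * x ^ 2 with hq
  have hqi : Integrable q P :=
    ((integrable_const _).add (hx.const_mul _)).add (hInt.const_mul _)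
  have hqe : ∫ x, q x ∂P = α - β * m + γ * (1 + m ^ 2) := by
    have hlin : Integrable (fun x : ℝ => (α - β * m + γ * m ^ 2) + (β - 2 * γ * m) * x) P :=
      (integrable_const _).add (hx.const_mul _)
    simp only [hq]
    rw [integral_add hlin (hInt.const_mul _),
      integral_add (integrable_const _) (hx.const_mul _), integral_const_mul,
      integral_const_mul, hmean, hvar]
    simp
    ring
  set I : ℝ → ℝ := (Set.Ioi k).indicator (fun _ => (1 : ℝ)) with hI
  have hIi : Integrable I P := (integrable_const _).indicator measurableSet_Ioi
  have hIe : ∫ x, I x ∂P = (P (Set.Ioi k)).toReal := by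
    rw [hI, integral_indicator measurableSet_Ioi]
    simp [Measure.real]
  have hIm : Measurable I := measurable_const.indicator measurableSet_Ioi
  have main : 0 ≤ ∫ x, (q x - I x) ∂P := by
    refine layer f m h1 h2 _ (by fun_prop) (hqi.sub hIi) ?_
    intro a b ha hb
    have hab : a ≤ b := ha.trans hb
    have i1 : IntegrableOn q (Set.Ioc a b) :=
      (Continuous.integrableOn_Icc (by fun_prop)).mono_set Set.Ioc_subset_Icc_self
    have i2 : IntegrableOn I (Set.Ioc a b) := by
      have : IntegrableOn (fun _ : ℝ => (1:ℝ)) (Set.Ioc a b) :=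
        integrableOn_const (by simp)
      exact this.indicator measurableSet_Ioi
    refine ⟨i1.sub i2, ?_⟩
    rw [integral_sub i1 i2]
    have e1 : ∫ x in Set.Ioc a b, I x = max b k - max a k := by
      rw [hI, integral_indicator measurableSet_Ioi, Measure.restrict_restrict measurableSet_Ioi]
      have : Set.Ioi k ∩ Set.Ioc a b = Set.Ioc (max a k) b := by
        ext x; simp only [Set.mem_inter_iff, Set.mem_Ioi, Set.mem_Ioc, max_lt_iff]; tauto
      rw [this]
      simp only [integral_const, MeasurableSet.univ, measureReal_restrict_apply, Set.univ_inter,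
        Real.volume_real_Ioc, smul_eq_mul, mul_one]
      grind
    have e2 : ∫ x in Set.Ioc a b, q x =
        (α * (b - m) + β * (b - m) ^ 2 / 2 + γ * (b - m) ^ 3 / 3) -
        (α * (a - m) + β * (a - m) ^ 2 / 2 + γ * (a - m) ^ 3 / 3) := by
      rw [← intervalIntegral.integral_of_le hab]
      rw [intervalIntegral.integral_eq_sub_of_hasDerivAt
        (f := fun x => α * (x - m) + β * (x - m) ^ 2 / 2 + γ * (x - m) ^ 3 / 3)]
      · intro x _
        have d0 : HasDerivAt (fun x : ℝ => x - m) 1 x := (hasDerivAt_id x).sub_const m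
        have := ((d0.const_mul α).add (((d0.pow 2).const_mul β).div_const 2)).add
          (((d0.pow 3).const_mul γ).div_const 3)
        refine this.congr_deriv ?_
        simp only [hq]
        push_cast
        ring
      · exact Continuous.intervalIntegrable (by fun_prop) _ _
    rw [e1, e2]
    have p1 := hpos (b - m) (by linarith)
    have p2 := hneg (a - m) (by linarith)
    rw [add_sub_cancel] at p1 p2
    linarith
  rw [integral_sub hqi hIi, hqe, hIe] at main
  rw [hIci]
  linarith

/-- Choice of the tangency parameter. -/
theorem choose_u (W e : ℝ) (hW : 0 < W) (hW' : W ≤ 5 / 6) (he : 0 < e) :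
    ∃ u : ℝ, 1 < u ∧ 4 - 2 * W * e * (4 * u ^ 2 - 6 * u + 3)
      + W * e ^ 2 * (u - 1) * (4 * W * u ^ 3 - 8 * u ^ 2 + 9 * u - 3) ≤ 0 := by
  have : ∃ u : ℝ, 1 < u ∧
      e * (u - 1) * (4 * W * u ^ 3 - 8 * u ^ 2 + 9 * u - 3) = 4 * u ^ 2 - 6 * u + 3 := by
    set φ : ℝ → ℝ := fun u => e * (u - 1) * (4 * W * u ^ 3 - 8 * u ^ 2 + 9 * u - 3)
      - (4 * u ^ 2 - 6 * u + 3) with hφ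
    set M : ℝ := 2 + 3 / W + 4 / e with hM
    have hM1 : 1 ≤ M := by
      have : 0 < 3 / W := by positivity
      have : 0 < 4 / e := by positivity
      linarith
    have b1 : φ 1 < 0 := by simp only [hφ]; norm_num
    have b2 : 0 < φ M := by
      have w1 : 0 < 3 / W := by positivity
      have w2 : 0 < 4 / e := by positivity
      have w3 : 3 ≤ W * M := by
        have : W * M = 2 * W + 3 + W * (4 / e) := by rw [hM]; field_simp
        have : 0 < W * (4 / e) := by positivity
        linarith
      have w4 : 4 ≤ e * (M - 1) := by
        have : e * (M - 1) = e + e * (3 / W) + 4 := by rw [hM]; field_simp; ring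
        have : 0 < e * (3 / W) := by positivity
        linarith
      have w7 : 0 ≤ M ^ 2 * (W * M - 3) := mul_nonneg (sq_nonneg _) (by linarith)
      have w5 : 4 * M ^ 2 + 9 * M - 3 ≤ 4 * W * M ^ 3 - 8 * M ^ 2 + 9 * M - 3 := by nlinarith
      have w8 : 4 * M ^ 2 - 6 * M + 3 < e * (M - 1) * (4 * W * M ^ 3 - 8 * M ^ 2 + 9 * M - 3) := by
        have w9 : 0 ≤ 4 * W * M ^ 3 - 8 * M ^ 2 + 9 * M - 3 := by nlinarith
        nlinarith [mul_le_mul_of_nonneg_right w4 w9]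
      simp only [hφ]; linarith
    have hc : ContinuousOn φ (Set.Icc 1 M) := by fun_prop
    obtain ⟨u, hu, hu0⟩ := intermediate_value_Icc hM1 hc ⟨b1.le, b2.le⟩
    refine ⟨u, lt_of_le_of_ne hu.1 ?_, ?_⟩
    · rintro rfl; rw [hu0] at b1; exact lt_irrefl _ b1
    · simp only [hφ] at hu0; linarith
  obtain ⟨u, hu, hR⟩ := this
  refine ⟨u, hu, ?_⟩
  set R := 4 * u ^ 2 - 6 * u + 3 with hRd
  set C := 4 * W * u ^ 3 - 8 * u ^ 2 + 9 * u - 3 with hC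
  have hRpos : 0 < R := by rw [hRd]; nlinarith [sq_nonneg (u - 1)]
  have hD : 0 ≤ W * R ^ 2 - 4 * (u - 1) * C := by
    have e0 : W * R ^ 2 - 4 * (u - 1) * C
        = (1 - 6 / 5 * W) * (4 * ((u - 1) * (8 * u ^ 2 - 9 * u + 3)))
          + (6 / 5 * W) * (16 / 3 * ((u - 3 / 2) ^ 2 * (u - 3 / 8))) := by
      rw [hRd, hC]; ring
    rw [e0]
    have a1 : 0 ≤ (u - 1) * (8 * u ^ 2 - 9 * u + 3) :=
      mul_nonneg (by linarith) (by nlinarith [sq_nonneg (16 * u - 9)])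
    have a2 : 0 ≤ (u - 3 / 2) ^ 2 * (u - 3 / 8) := mul_nonneg (sq_nonneg _) (by linarith)
    have a3 : 0 ≤ 1 - 6 / 5 * W := by linarith
    positivity
  have h4 : 4 ≤ W * e * R := by
    have h5 : 4 * R ≤ W * e * R * R := by
      have := mul_nonneg he.le hD
      nlinarith
    exact le_of_mul_le_mul_right h5 hRpos
  have : W * e ^ 2 * (u - 1) * C = W * e * (e * (u - 1) * C) := by ring
  rw [this, hR]
  linarith

theorem one_sided_vysochanskij_petunin_small
    (P : Measure ℝ) [IsProbabilityMeasure P] (m : ℝ)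
    (hU : IsUnimodalWithMode P m)
    (hInt : Integrable (fun x => x ^ 2) P)
    (hmean : (∫ x, x ∂P) = 0) (hvar : (∫ x, x ^ 2 ∂P) = 1)
    (k : ℝ) (hk0 : 0 ≤ k) (hk : k < Real.sqrt (5 / 3)) :
    (P (Set.Ici k)).toReal ≤ 1 - (4 / 3) * k ^ 2 / (1 + k ^ 2) := by
  rcases hk0.eq_or_lt with rfl | hk1
  · simp only [ne_eq, OfNat.ofNat_ne_zero, not_false_eq_true, zero_pow, mul_zero, zero_div,
      sub_zero]
    exact measureReal_le_one
  have hk2 : k ^ 2 < 5 / 3 := (Real.lt_sqrt hk0).1 hk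
  rcases le_or_gt k m with hkm | hmk
  · -- mode to the right of the threshold
    set N := m ^ 2 + 2 * m * k + 3 with hN
    have hm0 : 0 < m := by linarith
    have hNpos : 0 < N := by positivity
    set L := N / (m + k) with hL
    have hLpos : 0 < L := by positivity
    have hLd : m - k ≤ 2 * L := by
      rw [hL, ← mul_div_assoc, le_div_iff₀ (by positivity)]
      nlinarith [mul_pos hm0 hk1]
    have hc := cert P m hU hInt hmean hvar k (1 + 2 * (m - k) / L)
      (2 * ((m - k) + 2 * L) / L ^ 2) (3 / L ^ 2) ?_ ?_
    · refine hc.trans ?_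
      have e1 : 1 + 2 * (m - k) / L - 2 * ((m - k) + 2 * L) / L ^ 2 * m + 3 / L ^ 2 * (1 + m ^ 2)
          = 1 - (m + k) ^ 2 / N := by
        rw [hL]; field_simp; rw [hN]; ring
      rw [e1]
      have : (4 / 3) * k ^ 2 / (1 + k ^ 2) ≤ (m + k) ^ 2 / N := by
        rw [div_le_div_iff₀ (by positivity) hNpos, hN]
        have : 0 ≤ (3 - k ^ 2) * ((m - k) * (m + 3 * k)) :=
          mul_nonneg (by linarith) (mul_nonneg (by linarith) (by linarith))
        nlinarith
      linarith
    · intro y hy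
      rw [max_eq_left (by linarith), max_eq_left hkm]
      have e2 : (1 + 2 * (m - k) / L) * y + 2 * ((m - k) + 2 * L) / L ^ 2 * y ^ 2 / 2
          + 3 / L ^ 2 * y ^ 3 / 3 = y + (y + (m - k)) * (y * (y + 2 * L)) / L ^ 2 := by
        field_simp; ring
      rw [e2]
      have h0 : 0 ≤ m - k := by linarith
      have : 0 ≤ (y + (m - k)) * (y * (y + 2 * L)) / L ^ 2 := by positivity
      linarith
    · intro y hy
      rw [max_eq_left hkm]
      rcases le_total k (m + y) with h | h
      · rw [max_eq_left h]
        have e2 : (1 + 2 * (m - k) / L) * y + 2 * ((m - k) + 2 * L) / L ^ 2 * y ^ 2 / 2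
            + 3 / L ^ 2 * y ^ 3 / 3 = y - (y + (m - k)) * ((-y) * (y + 2 * L)) / L ^ 2 := by
          field_simp; ring
        rw [e2]
        have : 0 ≤ (y + (m - k)) * ((-y) * (y + 2 * L)) / L ^ 2 :=
          div_nonneg (mul_nonneg (by linarith) (mul_nonneg (by linarith) (by linarith)))
            (sq_nonneg _)
        linarith
      · rw [max_eq_right h]
        have e2 : (1 + 2 * (m - k) / L) * y + 2 * ((m - k) + 2 * L) / L ^ 2 * y ^ 2 / 2
            + 3 / L ^ 2 * y ^ 3 / 3 = k - m - (-y - (m - k)) * (y + L) ^ 2 / L ^ 2 := by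
          field_simp; ring
        rw [e2]
        have : 0 ≤ (-y - (m - k)) * (y + L) ^ 2 / L ^ 2 :=
          div_nonneg (mul_nonneg (by linarith) (sq_nonneg _)) (sq_nonneg _)
        linarith
  · -- mode to the left of the threshold
    set d := k - m with hd
    have hdpos : 0 < d := by linarith
    set W := (4 / 3) * k ^ 2 / (1 + k ^ 2) with hW
    have hWpos : 0 < W := by positivity
    have hW' : W ≤ 5 / 6 := by
      rw [hW, div_le_iff₀ (by positivity)]; linarith
    obtain ⟨u, hu, hG⟩ := choose_u W (d / k) hWpos hW' (by positivity)
    have hu1 : 0 < u - 1 := by linarith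
    set c := d * u * (2 * u - 3) with hc
    set D := 4 * d ^ 2 * u ^ 3 * (u - 1) with hD
    have hDpos : 0 < D := by positivity
    have hcert := cert P m hU hInt hmean hvar k (c ^ 2 / D) (4 * c / D) (3 / D) ?_ ?_
    · refine hcert.trans ?_
      have e1 : c ^ 2 / D - 4 * c / D * m + 3 / D * (1 + m ^ 2)
          = (c ^ 2 - 4 * c * m + 3 * (1 + m ^ 2)) / D := by
        field_simp
      rw [e1, div_le_iff₀ hDpos]
      have hWk : 3 * (1 + k ^ 2) * W = 4 * k ^ 2 := by rw [hW]; field_simp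
      have hm : m = k - d := by rw [hd]; ring
      have e3 : W * (c ^ 2 - 4 * c * m + 3 * (1 + m ^ 2) - (1 - W) * D)
          = k ^ 2 * (4 - 2 * W * (d / k) * (4 * u ^ 2 - 6 * u + 3)
            + W * (d / k) ^ 2 * (u - 1) * (4 * W * u ^ 3 - 8 * u ^ 2 + 9 * u - 3)) := by
        have e4 : k ^ 2 * (4 - 2 * W * (d / k) * (4 * u ^ 2 - 6 * u + 3)
            + W * (d / k) ^ 2 * (u - 1) * (4 * W * u ^ 3 - 8 * u ^ 2 + 9 * u - 3))
            = 4 * k ^ 2 - 2 * W * d * k * (4 * u ^ 2 - 6 * u + 3)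
            + W * d ^ 2 * (u - 1) * (4 * W * u ^ 3 - 8 * u ^ 2 + 9 * u - 3) := by
          field_simp
        rw [e4, hc, hD, hm, ← hWk]
        ring
      have h5 : W * (c ^ 2 - 4 * c * m + 3 * (1 + m ^ 2) - (1 - W) * D) ≤ 0 := by
        rw [e3]; exact mul_nonpos_of_nonneg_of_nonpos (sq_nonneg _) hG
      have h6 := nonpos_of_mul_nonpos_right h5 hWpos
      linarith
    · intro y hy
      rw [max_eq_right hmk.le]
      have e2 : c ^ 2 / D * y + 4 * c / D * y ^ 2 / 2 + 3 / D * y ^ 3 / 3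
          = y * (y + c) ^ 2 / D := by field_simp; ring
      rw [e2]
      rcases le_total k (m + y) with h | h
      · rw [max_eq_left h]
        have e5 : y * (y + c) ^ 2 / D
            = y - d + (y - d * u) ^ 2 * (y + 4 * d * u * (u - 1)) / D := by
          rw [eq_comm, ← sub_eq_zero, hc, hD]; field_simp; ring
        rw [e5]
        have : 0 ≤ (y - d * u) ^ 2 * (y + 4 * d * u * (u - 1)) / D := by positivity
        linarith
      · rw [max_eq_right h, sub_self]; positivity
    · intro y hy
      rw [max_eq_right hmk.le, max_eq_right (by linarith), sub_self]
      have e2 : c ^ 2 / D * y + 4 * c / D * y ^ 2 / 2 + 3 / D * y ^ 3 / 3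
          = y * (y + c) ^ 2 / D := by field_simp; ring
      rw [e2]
      exact div_nonpos_of_nonpos_of_nonneg
        (mul_nonpos_of_nonpos_of_nonneg hy (sq_nonneg _)) hDpos.le
end

section
/- Let X be a real random variable whose distribution is unimodal with mode 0, and let τ² = E[X²] with τ > 0. Then for every k ≥ 2τ/√3, the probability that |X| ≥ k is at most 4τ²/(9k²); and for every k with 0 ≤ k < 2τ/√3, the probability that |X| ≥ k is at most 1 - k/(τ√3). (Gauss's inequality.) -/
open MeasureTheory

lemma gauss_aux (P : Measure ℝ) [IsProbabilityMeasure P]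
    (hU : IsUnimodalWithMode P 0)
    (hInt : Integrable (fun x => x ^ 2) P) (a b k T : ℝ) (ha : 0 ≤ a) (hb : 0 ≤ b)
    (hk : 0 < k) (hkT : k < T) (h1 : a * T ^ 2 + b = 1)
    (h2 : T - k ≤ a * T ^ 3 / 3 + b * T) :
    (P {x | k ≤ |x|}).toReal ≤ a * (∫ x, x ^ 2 ∂P) + b := by
  obtain ⟨f, hP, hm, hanti⟩ := hU
  have hS : MeasurableSet {x : ℝ | k ≤ |x|} := measurableSet_le measurable_const measurable_id.abs
  have hf : AEMeasurable f volume := by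
    have e1 := aemeasurable_restrict_of_monotoneOn (μ := volume) measurableSet_Iic hm
    have e2 := aemeasurable_restrict_of_antitoneOn (μ := volume) measurableSet_Ici hanti
    have := (aemeasurable_union_iff (μ := volume)).2 ⟨e1, e2⟩
    rwa [Set.Iic_union_Ici, Measure.restrict_univ] at this
  have htot : ∫⁻ x, f x ≠ ⊤ := by
    have : P Set.univ = 1 := measure_univ
    rw [hP, withDensity_apply _ MeasurableSet.univ, Measure.restrict_univ] at this
    rw [this]; simp
  have hfin : ∀ᵐ x, f x < ⊤ := ae_lt_top' hf htot
  have hfk : f k ≠ ⊤ := by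
    intro h
    apply htot
    rw [eq_top_iff]
    calc (⊤ : ENNReal) = ∫⁻ x in Set.Ioc 0 k, ⊤ := by simp [hk]
      _ ≤ ∫⁻ x in Set.Ioc 0 k, f x := by
        refine setLIntegral_mono' measurableSet_Ioc fun x hx => ?_
        rw [← h]; exact hanti hx.1.le hk.le hx.2
      _ ≤ _ := setLIntegral_le_lintegral _ _
  have hfk' : f (-k) ≠ ⊤ := by
    intro h
    apply htot
    rw [eq_top_iff]
    calc (⊤ : ENNReal) = ∫⁻ x in Set.Ico (-k) 0, ⊤ := by simp [hk]
      _ ≤ ∫⁻ x in Set.Ico (-k) 0, f x := by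
        refine setLIntegral_mono' measurableSet_Ico fun x hx => ?_
        rw [← h]; exact hm (by simpa using hk.le) hx.2.le hx.1
      _ ≤ _ := setLIntegral_le_lintegral _ _
  set φ : ℝ → ℝ := fun x => (a * x ^ 2 + b) - Set.indicator {x : ℝ | k ≤ |x|} 1 x with hφ
  have hi1 : Integrable (fun x => a * x ^ 2 + b) P := (hInt.const_mul a).add (integrable_const b)
  have hi2 : Integrable (Set.indicator {x : ℝ | k ≤ |x|} (1 : ℝ → ℝ)) P :=
    (integrable_const (1 : ℝ)).indicator hS
  have hφP : Integrable φ P := hi1.sub hi2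
  have hE : ∫ x, φ x ∂P = a * (∫ x, x ^ 2 ∂P) + b - (P {x | k ≤ |x|}).toReal := by
    rw [hφ, integral_sub hi1 hi2, integral_add (hInt.const_mul a) (integrable_const b),
      integral_const_mul, integral_indicator_one hS]
    simp [Measure.real]
  have hE2 : ∫ x, φ x ∂P = ∫ x, (f x).toReal * φ x := by
    rw [hP, integral_withDensity_eq_integral_toReal_smul₀ hf hfin]
    rfl
  have hFi : Integrable (fun x => (f x).toReal * φ x) := by
    rw [hP, integrable_withDensity_iff_integrable_smul₀' hf hfin] at hφP
    exact hφP
  have hT : 0 < T := hk.trans hkT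
  -- integrals of φ over the two halves
  have hq : ∀ u v : ℝ, IntervalIntegrable (fun x : ℝ => a * x ^ 2 + b) volume u v := fun u v =>
    (by fun_prop : Continuous fun x : ℝ => a * x ^ 2 + b).intervalIntegrable u v
  have hqi : ∀ u v : ℝ, ∫ x in u..v, (a * x ^ 2 + b) = a * (v ^ 3 - u ^ 3) / 3 + b * (v - u) := by
    intro u v
    rw [intervalIntegral.integral_add, intervalIntegral.integral_const_mul, integral_pow,
      intervalIntegral.integral_const, smul_eq_mul]
    · norm_num; ring
    · exact (by fun_prop : Continuous fun x : ℝ => a * x ^ 2).intervalIntegrable u v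
    · simp
  have hindi : ∀ u v : ℝ, IntegrableOn (Set.indicator {x : ℝ | k ≤ |x|} (1 : ℝ → ℝ))
      (Set.Ioc u v) := fun u v =>
    (integrable_const (1 : ℝ)).indicator hS
  have hφo : ∀ u v : ℝ, u ≤ v → IntegrableOn φ (Set.Ioc u v) := fun u v huv =>
    ((intervalIntegrable_iff_integrableOn_Ioc_of_le huv).1 (hq u v)).sub (hindi u v)
  have hφi : ∀ u v : ℝ, u ≤ v → ∫ x in Set.Ioc u v, φ x = a * (v ^ 3 - u ^ 3) / 3 + b * (v - u) -
      volume.real ({x : ℝ | k ≤ |x|} ∩ Set.Ioc u v) := by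
    intro u v huv
    rw [hφ, integral_sub ((intervalIntegrable_iff_integrableOn_Ioc_of_le huv).1 (hq u v))
      (hindi u v), ← intervalIntegral.integral_of_le huv, hqi, integral_indicator_one hS]
    simp [Measure.real, Measure.restrict_apply hS]
  have hI1 : 0 ≤ ∫ x in Set.Ioc 0 T, φ x := by
    rw [hφi 0 T hT.le]
    have : {x : ℝ | k ≤ |x|} ∩ Set.Ioc 0 T = Set.Icc k T := by
      ext x
      simp only [Set.mem_inter_iff, Set.mem_setOf_eq, Set.mem_Ioc, Set.mem_Icc]
      constructor
      · rintro ⟨h, h0, h'⟩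
        rw [abs_of_pos h0] at h
        exact ⟨h, h'⟩
      · rintro ⟨h, h'⟩
        have h0 : 0 < x := hk.trans_le h
        rw [abs_of_pos h0]
        exact ⟨h, h0, h'⟩
    rw [this, Real.volume_real_Icc_of_le hkT.le]
    norm_num
    linarith
  have hI2 : 0 ≤ ∫ x in Set.Ioc (-T) 0, φ x := by
    rw [hφi (-T) 0 (by linarith)]
    have : {x : ℝ | k ≤ |x|} ∩ Set.Ioc (-T) 0 = Set.Ioc (-T) (-k) := by
      ext x
      simp only [Set.mem_inter_iff, Set.mem_setOf_eq, Set.mem_Ioc]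
      constructor
      · rintro ⟨h, h0, h'⟩
        rw [abs_of_nonpos h'] at h
        exact ⟨h0, by linarith⟩
      · rintro ⟨h, h'⟩
        have h0 : x ≤ 0 := by linarith
        rw [abs_of_nonpos h0]
        exact ⟨by linarith, h, h0⟩
    rw [this, Real.volume_real_Ioc_of_le (by linarith)]
    ring_nf
    linarith
  set h : ℝ → ℝ := fun x => (f k).toReal * (Set.Ioc 0 T).indicator φ x +
    (f (-k)).toReal * (Set.Ioc (-T) 0).indicator φ x with hh
  have hj1 : Integrable (fun x => (f k).toReal * (Set.Ioc 0 T).indicator φ x) :=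
    ((hφo 0 T hT.le).integrable_indicator measurableSet_Ioc).const_mul _
  have hj2 : Integrable (fun x => (f (-k)).toReal * (Set.Ioc (-T) 0).indicator φ x) :=
    ((hφo (-T) 0 (by linarith)).integrable_indicator measurableSet_Ioc).const_mul _
  have hhpos : 0 ≤ ∫ x, h x := by
    rw [hh, integral_add hj1 hj2, integral_const_mul, integral_const_mul,
      integral_indicator measurableSet_Ioc, integral_indicator measurableSet_Ioc]
    positivity
  have hle : ∫ x, h x ≤ ∫ x, (f x).toReal * φ x := by
    refine integral_mono_ae (hj1.add hj2) hFi ?_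
    have hne : ∀ᵐ x : ℝ, x ≠ 0 := Measure.ae_ne volume 0
    filter_upwards [hfin, hne] with x hx hx0
    have hφin : |x| < k → 0 ≤ φ x := by
      intro hxk
      have : x ∉ {x : ℝ | k ≤ |x|} := by simpa using hxk
      simp only [hφ, Set.indicator_of_notMem this]
      have := sq_nonneg x
      have := mul_nonneg ha this
      linarith
    have hφmid : k ≤ |x| → φ x = a * (|x| ^ 2 - T ^ 2) := by
      intro hxk
      have : x ∈ {x : ℝ | k ≤ |x|} := hxk
      simp only [hφ, Set.indicator_of_mem this, sq_abs, Pi.one_apply]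
      linarith
    have hφm : k ≤ |x| → |x| ≤ T → φ x ≤ 0 := by
      intro u v
      rw [hφmid u]
      have : |x| ^ 2 ≤ T ^ 2 := pow_le_pow_left₀ (abs_nonneg x) v 2
      exact mul_nonpos_of_nonneg_of_nonpos ha (by linarith)
    have hφout : T ≤ |x| → 0 ≤ φ x := by
      intro v
      rw [hφmid (hkT.le.trans v)]
      have : T ^ 2 ≤ |x| ^ 2 := pow_le_pow_left₀ hT.le v 2
      exact mul_nonneg ha (by linarith)
    have hF0 : 0 ≤ (f x).toReal := ENNReal.toReal_nonneg
    simp only [hh]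
    rcases lt_or_gt_of_ne hx0 with hneg | hpos
    · have n1 : x ∉ Set.Ioc 0 T := fun h => by linarith [h.1]
      rw [Set.indicator_of_notMem n1, mul_zero, zero_add]
      have hax : |x| = -x := abs_of_neg hneg
      by_cases hxT : -T < x
      · rw [Set.indicator_of_mem (show x ∈ Set.Ioc (-T) 0 from ⟨hxT, hneg.le⟩)]
        rcases lt_or_ge (-x) k with hxk | hxk
        · refine mul_le_mul_of_nonneg_right ?_ (hφin (by rwa [hax]))
          exact ENNReal.toReal_mono hx.ne (hm (by simpa using hk.le) hneg.le (by linarith))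
        · refine mul_le_mul_of_nonpos_right ?_ (hφm (by rwa [hax]) (by rw [hax]; linarith))
          exact ENNReal.toReal_mono hfk' (hm hneg.le (by simpa using hk.le) (by linarith))
      · rw [Set.indicator_of_notMem (fun h => hxT h.1), mul_zero]
        exact mul_nonneg hF0 (hφout (by rw [hax]; linarith))
    · have n1 : x ∉ Set.Ioc (-T) 0 := fun h => by linarith [h.2]
      rw [Set.indicator_of_notMem n1, mul_zero, add_zero]
      have hax : |x| = x := abs_of_pos hpos
      by_cases hxT : x ≤ T
      · rw [Set.indicator_of_mem (show x ∈ Set.Ioc 0 T from ⟨hpos, hxT⟩)]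
        rcases lt_or_ge x k with hxk | hxk
        · refine mul_le_mul_of_nonneg_right ?_ (hφin (by rwa [hax]))
          exact ENNReal.toReal_mono hx.ne (hanti hpos.le hk.le hxk.le)
        · refine mul_le_mul_of_nonpos_right ?_ (hφm (by rwa [hax]) (by rwa [hax]))
          exact ENNReal.toReal_mono hfk (hanti hk.le hpos.le hxk)
      · rw [Set.indicator_of_notMem (fun h => hxT h.2), mul_zero]
        exact mul_nonneg hF0 (hφout (by rw [hax]; linarith))
  linarith

/-- **Gauss's inequality.** If `X` is a real random variable (given by its law `P`) whose
distribution is unimodal with mode `0`, and `τ² = E[X²]` with `τ > 0`, then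
`P[|X| ≥ k] ≤ 4τ²/(9k²)` for `k ≥ 2τ/√3`, and `P[|X| ≥ k] ≤ 1 - k/(τ√3)` for
`0 ≤ k < 2τ/√3`. -/
theorem gauss_inequality
    (P : Measure ℝ) [IsProbabilityMeasure P]
    (hU : IsUnimodalWithMode P 0)
    (hInt : Integrable (fun x => x ^ 2) P)
    (τ : ℝ) (hτ : 0 < τ) (hτ2 : τ ^ 2 = ∫ x, x ^ 2 ∂P) :
    (∀ k : ℝ, 2 * τ / Real.sqrt 3 ≤ k →
      (P {x | k ≤ |x|}).toReal ≤ 4 * τ ^ 2 / (9 * k ^ 2)) ∧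
    (∀ k : ℝ, 0 ≤ k → k < 2 * τ / Real.sqrt 3 →
      (P {x | k ≤ |x|}).toReal ≤ 1 - k / (τ * Real.sqrt 3)) := by
  have h3 : 0 < Real.sqrt 3 := by positivity
  have h33 : Real.sqrt 3 ^ 2 = 3 := Real.sq_sqrt (by norm_num)
  constructor
  · intro k hk
    have hk0 : 0 < k := lt_of_lt_of_le (by positivity) hk
    have := gauss_aux P hU hInt (4 / (9 * k ^ 2)) 0 k (3 / 2 * k) (by positivity) le_rfl hk0
      (by linarith) (by field_simp; norm_num) (le_of_eq (by field_simp; norm_num))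
    rw [← hτ2] at this
    refine this.trans (le_of_eq ?_)
    ring
  · intro k hk0 hk
    rcases hk0.eq_or_lt with rfl | hk0
    · simp
    obtain ⟨c, hc⟩ : ∃ c, c = τ * Real.sqrt 3 := ⟨_, rfl⟩
    have hc0 : 0 < c := by rw [hc]; positivity
    have hc2 : c ^ 2 = 3 * τ ^ 2 := by rw [hc, mul_pow, h33]; ring
    have hkc : 3 * k < 2 * c := by
      rw [lt_div_iff₀ h3] at hk
      have := mul_lt_mul_of_pos_right hk h3
      rw [hc]
      nlinarith
    have := gauss_aux P hU hInt (3 * k / (2 * c ^ 3)) (1 - 3 * k / (2 * c)) k c (by positivity)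
      (by rw [sub_nonneg, div_le_one (by positivity)]; exact hkc.le) hk0
      (by linarith) (by field_simp; ring) (le_of_eq (by field_simp; ring))
    rw [← hτ2] at this
    rw [← hc]
    refine this.trans (le_of_eq ?_)
    have : τ ^ 2 = c ^ 2 / 3 := by linarith
    rw [this]
    field_simp
    ring
end

section
/- For every ε ∈ (0, 1/2), the tightening coefficients of the three distributionally robust reformulations are ordered: f_S⁻¹(1-ε) ≤ f_U⁻¹(1-ε) ≤ f_C⁻¹(1-ε). Explicitly: if 0 < ε ≤ 1/6 then √(2/(9ε)) ≤ √(4/(9ε) - 1) ≤ √((1-ε)/ε), and if 1/6 < ε < 1/2 then √3·(1-2ε) ≤ √(3(1-ε)/(1+3ε)) ≤ √((1-ε)/ε). -/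
/-- **Ordering of the tightening coefficients** of the three distributionally robust
reformulations: for every `ε ∈ (0, 1/2)`, `f_S⁻¹(1-ε) ≤ f_U⁻¹(1-ε) ≤ f_C⁻¹(1-ε)`,
written out explicitly on each branch. -/
theorem tightening_coefficients_ordered (ε : ℝ) (hε0 : 0 < ε) (hε1 : ε < 1 / 2) :
    (ε ≤ 1 / 6 →
      Real.sqrt (2 / (9 * ε)) ≤ Real.sqrt (4 / (9 * ε) - 1) ∧
      Real.sqrt (4 / (9 * ε) - 1) ≤ Real.sqrt ((1 - ε) / ε)) ∧
    (1 / 6 < ε →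
      Real.sqrt 3 * (1 - 2 * ε) ≤ Real.sqrt (3 * (1 - ε) / (1 + 3 * ε)) ∧
      Real.sqrt (3 * (1 - ε) / (1 + 3 * ε)) ≤ Real.sqrt ((1 - ε) / ε)) := by
  refine ⟨fun h => ⟨?_, ?_⟩, fun h => ⟨?_, ?_⟩⟩
  · apply Real.sqrt_le_sqrt
    have h1 : 4 / (9 * ε) - 1 - 2 / (9 * ε) = (2 - 9 * ε) / (9 * ε) := by
      field_simp
      ring
    have h2 : 0 ≤ (2 - 9 * ε) / (9 * ε) := div_nonneg (by linarith) (by linarith)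
    linarith
  · apply Real.sqrt_le_sqrt
    have h1 : (1 - ε) / ε - (4 / (9 * ε) - 1) = 5 / (9 * ε) := by
      field_simp
      ring
    have h2 : 0 ≤ 5 / (9 * ε) := by positivity
    linarith
  · apply Real.le_sqrt_of_sq_le
    rw [mul_pow, Real.sq_sqrt (by norm_num), le_div_iff₀ (by linarith)]
    nlinarith [mul_nonneg (sq_nonneg ε) (by linarith : 0 ≤ 2 - 3 * ε)]
  · apply Real.sqrt_le_sqrt
    rw [div_le_div_iff₀ (by linarith) hε0]
    nlinarith
end

section
/- Let ε ∈ (0, 1), let δ be any random vector in ℝⁿ with mean vector m and finite covariance matrix Σ, and let a, c ∈ ℝ and b ∈ ℝⁿ. If a + bᵀm + √((1-ε)/ε)·√(bᵀΣb) ≤ c, then the probability that a + bᵀδ ≤ c is at least 1-ε. (Distributionally robust reformulation of a single linear chance constraint given only mean and covariance.) -/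
open MeasureTheory Matrix

/-- Cantelli's inequality for a centred variable, in the form needed below. -/
lemma cantelli_aux {Ω : Type*} [MeasurableSpace Ω] (P : Measure Ω) [IsProbabilityMeasure P]
    (Y : Ω → ℝ) (hY1 : Integrable Y P) (hY2 : Integrable (fun x => Y x ^ 2) P)
    (h0 : ∫ x, Y x ∂P = 0) (V t ε : ℝ) (hV : ∫ x, Y x ^ 2 ∂P = V)
    (hε0 : 0 < ε) (hε1 : ε < 1)
    (h : Real.sqrt ((1 - ε) / ε) * Real.sqrt V ≤ t) :
    P.real {x | t < Y x} ≤ ε := by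
  have hVnn : 0 ≤ V := hV ▸ integral_nonneg (fun x => sq_nonneg _)
  rcases hVnn.eq_or_lt with hV0 | hVpos
  · have ht : 0 ≤ t := by
      rw [← hV0] at h; simpa using h
    have hae : (fun x => Y x ^ 2) =ᵐ[P] 0 := by
      rw [← integral_eq_zero_iff_of_nonneg (fun x => sq_nonneg _) hY2, hV, hV0]
    have hz : P {x | t < Y x} = 0 := by
      refine measure_eq_zero_iff_ae_notMem.mpr ?_
      filter_upwards [hae] with x hx
      have : Y x = 0 := by simpa using hx
      simp [this, ht]
    simp [Measure.real, hz, hε0.le]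
  · have hr : 0 < (1 - ε) / ε := div_pos (by linarith) hε0
    have ht : 0 < t := lt_of_lt_of_le (by positivity) h
    have ht2 : (1 - ε) / ε * V ≤ t ^ 2 := by
      rw [← Real.sqrt_mul hr.le] at h
      exact (Real.sqrt_le_left ht.le).mp h
    have ht3 : (1 - ε) * V ≤ ε * t ^ 2 := by
      rw [div_mul_eq_mul_div, div_le_iff₀ hε0] at ht2
      linarith
    obtain ⟨u, hu⟩ : ∃ u, u = V / t := ⟨_, rfl⟩
    have hu0 : 0 < u := hu ▸ div_pos hVpos ht
    have hut : V = u * t := by rw [hu]; field_simp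
    have hexp : (fun x => (Y x + u) ^ 2) = fun x => Y x ^ 2 + (2 * u) * Y x + u ^ 2 := by
      funext x; ring
    have hi1 : Integrable (fun x => Y x ^ 2 + (2 * u) * Y x) P := hY2.add (hY1.const_mul _)
    have hint : Integrable (fun x => (Y x + u) ^ 2) P := by
      rw [hexp]; exact hi1.add (integrable_const _)
    have hval : ∫ x, (Y x + u) ^ 2 ∂P = V + u ^ 2 := by
      rw [hexp, integral_add hi1 (integrable_const _), integral_add hY2 (hY1.const_mul _),
        integral_const_mul, h0, hV]
      simp
    have hM := mul_meas_ge_le_integral_of_nonneg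
      (Filter.Eventually.of_forall (fun x => sq_nonneg (Y x + u))) hint ((t + u) ^ 2)
    rw [hval] at hM
    have hsub : P.real {x | t < Y x} ≤ P.real {x | (t + u) ^ 2 ≤ (Y x + u) ^ 2} := by
      refine measureReal_mono (fun x hx => ?_)
      have hx' : t < Y x := hx
      have hx2 : (t + u) ^ 2 ≤ (Y x + u) ^ 2 :=
        pow_le_pow_left₀ (by positivity) (by linarith) 2
      exact hx2
    refine hsub.trans ?_
    have hk : V + u ^ 2 ≤ ε * (t + u) ^ 2 := by
      rw [hut] at ht3 ⊢
      have h4 : (1 - ε) * u ≤ ε * t := by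
        have : ((1 - ε) * u) * t ≤ (ε * t) * t := by linarith
        exact le_of_mul_le_mul_right this ht
      nlinarith [mul_le_mul_of_nonneg_right h4 (add_pos ht hu0).le]
    have hpos : 0 < (t + u) ^ 2 := by positivity
    refine le_of_mul_le_mul_left ?_ hpos
    linarith

/-- **Distributionally robust reformulation of a single linear chance constraint given only
mean and covariance.** If `δ` is any random vector in `ℝⁿ` (given by its law `P`) with mean
vector `m` and (finite) covariance matrix `S`, and
`a + bᵀm + √((1-ε)/ε) √(bᵀSb) ≤ c`, then `P[a + bᵀδ ≤ c] ≥ 1 - ε`. -/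
theorem distributionally_robust_linear_chance_constraint
    {n : ℕ} (P : Measure (Fin n → ℝ)) [IsProbabilityMeasure P]
    (hInt : ∀ i, Integrable (fun x => x i ^ 2) P)
    (m : Fin n → ℝ) (S : Matrix (Fin n) (Fin n) ℝ)
    (hm : ∀ i, m i = ∫ x, x i ∂P)
    (hS : ∀ i j, S i j = ∫ x, (x i - m i) * (x j - m j) ∂P)
    (a c : ℝ) (b : Fin n → ℝ) (ε : ℝ) (hε0 : 0 < ε) (hε1 : ε < 1)
    (h : a + (∑ i, b i * m i) + Real.sqrt ((1 - ε) / ε) * Real.sqrt (b ⬝ᵥ S.mulVec b) ≤ c) :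
    1 - ε ≤ (P {x | a + ∑ i, b i * x i ≤ c}).toReal := by
  have hL : ∀ i, MemLp (fun x : Fin n → ℝ => x i) 2 P := fun i =>
    (memLp_two_iff_integrable_sq (measurable_pi_apply i).aestronglyMeasurable).mpr (hInt i)
  have hC : ∀ i, MemLp (fun x : Fin n → ℝ => x i - m i) 2 P := fun i =>
    (hL i).sub (memLp_const _)
  have hC1 : ∀ i, Integrable (fun x : Fin n → ℝ => x i - m i) P := fun i =>
    (hC i).integrable (by norm_num)
  have hCC : ∀ i j, Integrable (fun x : Fin n → ℝ => (x i - m i) * (x j - m j)) P := fun i j =>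
    (hC i).integrable_mul (hC j)
  have hsq : (fun x : Fin n → ℝ => (∑ i, b i * (x i - m i)) ^ 2) =
      fun x => ∑ i, ∑ j, (b i * b j) * ((x i - m i) * (x j - m j)) := by
    funext x
    rw [sq, Finset.sum_mul_sum]
    refine Finset.sum_congr rfl fun i _ => Finset.sum_congr rfl fun j _ => by ring
  have hterm : ∀ i j, Integrable
      (fun x : Fin n → ℝ => (b i * b j) * ((x i - m i) * (x j - m j))) P :=
    fun i j => (hCC i j).const_mul _
  have hY2 : Integrable (fun x : Fin n → ℝ => (∑ i, b i * (x i - m i)) ^ 2) P := by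
    rw [hsq]
    exact integrable_finsetSum _ fun i _ => integrable_finsetSum _ fun j _ => hterm i j
  have hV : ∫ x, (∑ i, b i * (x i - m i)) ^ 2 ∂P = b ⬝ᵥ S.mulVec b := by
    rw [hsq, integral_finsetSum _ fun i _ => integrable_finsetSum _ fun j _ => hterm i j]
    simp only [dotProduct, Matrix.mulVec, Finset.mul_sum]
    refine Finset.sum_congr rfl fun i _ => ?_
    rw [integral_finsetSum _ fun j _ => hterm i j]
    refine Finset.sum_congr rfl fun j _ => ?_
    rw [integral_const_mul, hS]
    ring
  have hY1 : Integrable (fun x : Fin n → ℝ => ∑ i, b i * (x i - m i)) P :=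
    integrable_finsetSum _ fun i _ => (hC1 i).const_mul _
  have h0 : ∫ x, (∑ i, b i * (x i - m i)) ∂P = 0 := by
    rw [integral_finsetSum _ fun i _ => (hC1 i).const_mul _]
    refine Finset.sum_eq_zero fun i _ => ?_
    rw [integral_const_mul, integral_sub ((hL i).integrable (by norm_num)) (integrable_const _),
      ← hm i]
    simp
  have key := cantelli_aux P _ hY1 hY2 h0 _ (c - a - ∑ i, b i * m i) ε hV hε0 hε1 (by linarith)
  have hmeas : MeasurableSet {x : Fin n → ℝ | a + ∑ i, b i * x i ≤ c} :=
    measurableSet_le (by fun_prop) measurable_const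
  have hcompl : {x : Fin n → ℝ | c - a - ∑ i, b i * m i < ∑ i, b i * (x i - m i)} =
      {x : Fin n → ℝ | a + ∑ i, b i * x i ≤ c}ᶜ := by
    ext x
    simp only [Set.mem_ofPred_eq, Set.mem_compl_iff, not_le, mul_sub, Finset.sum_sub_distrib]
    constructor <;> intro hx <;> linarith
  rw [hcompl, probReal_compl_eq_one_sub hmeas] at key
  change 1 - ε ≤ P.real _
  linarith
end

section
/- Let ε ∈ (0, 1), let m, c ∈ ℝ and s > 0. If m + √((1-ε)/ε)·s > c, then there exists a real random variable X with mean m and variance s² such that the probability that X ≤ c is strictly less than 1-ε. (The Cantelli-based distributionally robust reformulation is necessary as well as sufficient: no smaller uncertainty margin guarantees the chance constraint for all distributions with the given mean and variance.) -/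
open MeasureTheory

/-- **Necessity of the Cantelli-based reformulation.** If `m + √((1-ε)/ε) s > c` with `s > 0`
and `ε ∈ (0,1)`, then there is a real random variable (given by its law `P`) with mean `m` and
variance `s²` such that `P[X ≤ c] < 1 - ε`. -/
theorem cantelli_reformulation_necessary
    (ε m c s : ℝ) (hε0 : 0 < ε) (hε1 : ε < 1) (hs : 0 < s)
    (h : c < m + Real.sqrt ((1 - ε) / ε) * s) :
    ∃ P : Measure ℝ, IsProbabilityMeasure P ∧
      Integrable (fun x => x ^ 2) P ∧
      (∫ x, x ∂P) = m ∧ (∫ x, (x - m) ^ 2 ∂P) = s ^ 2 ∧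
      (P (Set.Iic c)).toReal < 1 - ε := by
  have hr : 0 < Real.sqrt ((1 - ε) / ε) := Real.sqrt_pos.mpr (div_pos (by linarith) hε0)
  have h' : (c - m) / s < Real.sqrt ((1 - ε) / ε) := by
    rw [div_lt_iff₀ hs]; linarith
  obtain ⟨t, ht1, ht2⟩ := exists_between (max_lt hr h')
  have ht : 0 < t := lt_of_le_of_lt (le_max_left _ _) ht1
  have hct : c < m + s * t := by
    have := lt_of_le_of_lt (le_max_right _ _) ht1
    rw [div_lt_iff₀ hs] at this; linarith
  have htε : t ^ 2 * ε < 1 - ε := by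
    rw [Real.lt_sqrt ht.le, lt_div_iff₀ hε0] at ht2; exact ht2
  have hD : 0 < 1 + t ^ 2 := by positivity
  have hp : 0 ≤ 1 / (1 + t ^ 2) := by positivity
  have hq : 0 ≤ t ^ 2 / (1 + t ^ 2) := by positivity
  have hint : ∀ (w a : ℝ) (f : ℝ → ℝ),
      Integrable f (ENNReal.ofReal w • Measure.dirac a) := fun w a f =>
    (integrable_dirac (by simp)).smul_measure ENNReal.ofReal_ne_top
  have key : ∀ f : ℝ → ℝ,
      ∫ x, f x ∂(ENNReal.ofReal (1 / (1 + t ^ 2)) • Measure.dirac (m + s * t) +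
        ENNReal.ofReal (t ^ 2 / (1 + t ^ 2)) • Measure.dirac (m - s / t)) =
      1 / (1 + t ^ 2) * f (m + s * t) + t ^ 2 / (1 + t ^ 2) * f (m - s / t) := by
    intro f
    rw [integral_add_measure (hint _ _ _) (hint _ _ _), integral_smul_measure,
      integral_smul_measure, integral_dirac, integral_dirac, ENNReal.toReal_ofReal hp,
      ENNReal.toReal_ofReal hq, smul_eq_mul, smul_eq_mul]
  refine ⟨ENNReal.ofReal (1 / (1 + t ^ 2)) • Measure.dirac (m + s * t) +
        ENNReal.ofReal (t ^ 2 / (1 + t ^ 2)) • Measure.dirac (m - s / t), ⟨?_⟩,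
        (hint _ _ _).add_measure (hint _ _ _), ?_, ?_, ?_⟩
  · simp only [Measure.add_apply, Measure.smul_apply, measure_univ, smul_eq_mul, mul_one]
    rw [← ENNReal.ofReal_add hp hq, ← add_div, div_self hD.ne', ENNReal.ofReal_one]
  · rw [key]; field_simp; ring
  · rw [key]; field_simp; ring
  · have h1 : Measure.dirac (m + s * t) (Set.Iic c) = 0 := by
      rw [Measure.dirac_apply' _ measurableSet_Iic]
      simp [hct]
    have h2 : Measure.dirac (m - s / t) (Set.Iic c) ≤ 1 := prob_le_one
    rw [Measure.add_apply, Measure.smul_apply, Measure.smul_apply, h1]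
    simp only [smul_eq_mul, mul_zero, zero_add]
    rw [ENNReal.toReal_mul, ENNReal.toReal_ofReal hq]
    have h3 : (Measure.dirac (m - s / t) (Set.Iic c)).toReal ≤ 1 :=
      ENNReal.toReal_le_of_le_ofReal zero_le_one (by simpa using h2)
    have h4 : t ^ 2 / (1 + t ^ 2) < 1 - ε := by
      rw [div_lt_iff₀ hD]; linarith
    exact lt_of_le_of_lt (mul_le_of_le_one_right hq h3) h4
end

section
/- For every k ≥ √(5/3) and every η > 0 there exists a real random variable X whose distribution is unimodal with some mode m, with mean 0 and variance 1, such that the probability that X ≥ k exceeds 4/(9(1+k²)) - η. (Hence the supremum of P[X ≥ k] over standardized unimodal distributions equals 4/(9(1+k²)) for k ≥ √(5/3).) -/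
open MeasureTheory

lemma vp_int_lin (a b c : ℝ) (hab : a ≤ b) (hc : 0 ≤ c) :
    ∫ x, x ∂(ENNReal.ofReal c • volume.restrict (Set.Icc a b)) = c * ((b ^ 2 - a ^ 2) / 2) := by
  rw [integral_smul_measure, integral_Icc_eq_integral_Ioc,
    ← intervalIntegral.integral_of_le hab, integral_id, ENNReal.toReal_ofReal hc, smul_eq_mul]

lemma vp_int_sq (a b c : ℝ) (hab : a ≤ b) (hc : 0 ≤ c) :
    ∫ x, x ^ 2 ∂(ENNReal.ofReal c • volume.restrict (Set.Icc a b))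
      = c * ((b ^ 3 - a ^ 3) / 3) := by
  rw [integral_smul_measure, integral_Icc_eq_integral_Ioc,
    ← intervalIntegral.integral_of_le hab, integral_pow, ENNReal.toReal_ofReal hc, smul_eq_mul]
  norm_num

lemma vp_integrable (a b c : ℝ) (f : ℝ → ℝ) (hf : Continuous f) :
    Integrable f (ENNReal.ofReal c • volume.restrict (Set.Icc a b)) :=
  Integrable.smul_measure (hf.continuousOn.integrableOn_Icc) ENNReal.ofReal_ne_top

lemma vp_ind (s : Set ℝ) (c : ENNReal) (x y : ℝ) (h : x ∈ s → y ∈ s) :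
    s.indicator (fun _ => c) x ≤ s.indicator (fun _ => c) y := by
  by_cases hx : x ∈ s
  · simp [hx, h hx]
  · simp [hx]

lemma vp_choose (k η : ℝ) (hk : 1 < k) (hη : 0 < η) :
    ∃ L : ℝ, 2 * (1 / k) < L ∧ k + 1 / k < L ∧ L < 3 * (1 + (1 / k) ^ 2) / (2 * (1 / k)) ∧
      4 / (9 * (1 + k ^ 2)) - η < 2 * (1 / k) / L ^ 2 * (L - (k + 1 / k)) := by
  have hk0 : 0 < k := by linarith
  set L0 : ℝ := 3 * (1 + (1 / k) ^ 2) / (2 * (1 / k)) with hL0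
  have e0 : L0 = 3 * (k ^ 2 + 1) / (2 * k) := by rw [hL0]; field_simp
  have hpos : 0 < L0 := by rw [e0]; positivity
  have h1 : 2 * (1 / k) < L0 := by
    rw [e0, mul_one_div, div_lt_div_iff₀ hk0 (by positivity)]
    nlinarith [mul_pos hk0 hk0, mul_pos (mul_pos hk0 hk0) hk0, mul_pos hk0 (sub_pos.2 hk),
      mul_pos (mul_pos hk0 hk0) (sub_pos.2 hk)]
  have h2 : k + 1 / k < L0 := by
    have : L0 = 3 / 2 * (k + 1 / k) := by rw [e0]; field_simp
    have : 0 < k + 1 / k := by positivity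
    linarith
  have h3 : 2 * (1 / k) / L0 ^ 2 * (L0 - (k + 1 / k)) = 4 / (9 * (1 + k ^ 2)) := by
    rw [e0]; field_simp; ring
  have hc : ContinuousAt (fun L : ℝ => 2 * (1 / k) / L ^ 2 * (L - (k + 1 / k))) L0 := by
    apply ContinuousAt.mul
    · exact ContinuousAt.div continuousAt_const (by fun_prop) (by positivity)
    · fun_prop
  have ev := hc.eventually (lt_mem_nhds (a := 4 / (9 * (1 + k ^ 2)) - η) (by
    simp only [h3]; linarith))
  have ev' := ((ev.and ((lt_mem_nhds h1).and (lt_mem_nhds h2))).filter_mono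
    (nhdsWithin_le_nhds (s := Set.Iio L0))).and self_mem_nhdsWithin
  obtain ⟨L, ⟨a, b, c⟩, d⟩ := ev'.exists
  exact ⟨L, b, c, d, a⟩

/-- **Sharpness of the one-sided Vysochanskij–Petunin inequality.** For every `k ≥ √(5/3)` and
`η > 0` there is a real random variable (given by its law `P`) unimodal with some mode `m`,
with mean `0` and variance `1`, such that `P[X ≥ k] > 4/(9(1+k²)) - η`. -/
theorem one_sided_vysochanskij_petunin_sharp
    (k : ℝ) (hk : Real.sqrt (5 / 3) ≤ k) (η : ℝ) (hη : 0 < η) :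
    ∃ (P : Measure ℝ) (m : ℝ), IsProbabilityMeasure P ∧
      IsUnimodalWithMode P m ∧
      Integrable (fun x => x ^ 2) P ∧
      (∫ x, x ∂P) = 0 ∧ (∫ x, x ^ 2 ∂P) = 1 ∧
      4 / (9 * (1 + k ^ 2)) - η < (P (Set.Ici k)).toReal := by
  have hk1 : 1 < k := lt_of_lt_of_le (Real.lt_sqrt_of_sq_lt (by norm_num)) hk
  obtain ⟨L, hL1, hL2, hL3, hL4⟩ := vp_choose k η hk1 hη
  have hk0 : 0 < k := by linarith
  have ha : 0 < 1 / k := by positivity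
  generalize 1 / k = a at *
  have hL : 0 < L := by linarith
  rw [lt_div_iff₀ (by positivity)] at hL3
  have hq : 0 < 1 - 2 * a / L := by rw [sub_pos, div_lt_one hL]; exact hL1
  set E : ℝ := Real.sqrt (3 * (1 + a ^ 2 - 2 * a * L / 3) / (1 - 2 * a / L)) with hE
  have hnum : 0 < 3 * (1 + a ^ 2 - 2 * a * L / 3) := by nlinarith
  have hE0 : 0 < E := Real.sqrt_pos.2 (div_pos hnum hq)
  have hE2 : E ^ 2 * (1 - 2 * a / L) = 3 * (1 + a ^ 2 - 2 * a * L / 3) := by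
    rw [hE, Real.sq_sqrt (div_pos hnum hq).le, div_mul_cancel₀ _ hq.ne']
  clear_value E
  set c : ℝ := (1 - 2 * a / L) / (2 * E) with hc
  set d : ℝ := 2 * a / L ^ 2 with hd
  have hc0 : 0 ≤ c := by positivity
  have hd0 : 0 ≤ d := by positivity
  have hcE : c * (2 * E) = 1 - 2 * a / L := by rw [hc]; field_simp
  have hdL : d * L = 2 * a / L := by rw [hd]; field_simp
  have hdL2 : d * L ^ 2 = 2 * a := by rw [hd]; field_simp
  clear_value c d
  set μ : Measure ℝ := ENNReal.ofReal c • volume.restrict (Set.Icc (-a - E) (-a + E)) with hμ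
  set ν : Measure ℝ := ENNReal.ofReal d • volume.restrict (Set.Icc (-a) (-a + L)) with hν
  have hden : μ + ν = volume.withDensity
      ((Set.Icc (-a - E) (-a + E)).indicator (fun _ => ENNReal.ofReal c) +
        (Set.Icc (-a) (-a + L)).indicator (fun _ => ENNReal.ofReal d)) := by
    rw [withDensity_add_left (measurable_const.indicator measurableSet_Icc),
      withDensity_indicator measurableSet_Icc, withDensity_indicator measurableSet_Icc,
      withDensity_const, withDensity_const]
  have hIk : ν (Set.Ici k) = ENNReal.ofReal (d * (L - (k + a))) := by
    rw [hν, Measure.smul_apply, Measure.restrict_apply measurableSet_Ici]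
    have : Set.Ici k ∩ Set.Icc (-a) (-a + L) = Set.Icc k (-a + L) := by
      ext x
      simp only [Set.mem_inter_iff, Set.mem_Ici, Set.mem_Icc]
      constructor
      · rintro ⟨h1, h2, h3⟩; exact ⟨h1, h3⟩
      · rintro ⟨h1, h2⟩; exact ⟨h1, by linarith, h2⟩
    rw [this, Real.volume_Icc, smul_eq_mul, ← ENNReal.ofReal_mul hd0]
    congr 2; ring
  have hprob : IsProbabilityMeasure (μ + ν) := by
    constructor
    rw [Measure.add_apply, hμ, hν, Measure.smul_apply, Measure.smul_apply,
      Measure.restrict_apply_univ, Measure.restrict_apply_univ, Real.volume_Icc, Real.volume_Icc,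
      smul_eq_mul, smul_eq_mul, ← ENNReal.ofReal_mul hc0, ← ENNReal.ofReal_mul hd0,
      ← ENNReal.ofReal_add (mul_nonneg hc0 (by linarith)) (mul_nonneg hd0 (by linarith)),
      ← ENNReal.ofReal_one]
    congr 1
    linear_combination hcE + hdL
  refine ⟨μ + ν, -a, hprob, ⟨_, hden, ?_, ?_⟩, ?_, ?_, ?_, ?_⟩
  · intro x hx y hy hxy
    simp only [Set.mem_Iic] at hx hy
    simp only [Pi.add_apply]
    refine add_le_add (vp_ind _ _ _ _ fun h => ?_) (vp_ind _ _ _ _ fun h => ?_)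
    · exact ⟨by linarith [h.1], by linarith⟩
    · exact ⟨by linarith [h.1], by linarith⟩
  · intro x hx y hy hxy
    simp only [Set.mem_Ici] at hx hy
    simp only [Pi.add_apply]
    refine add_le_add (vp_ind _ _ _ _ fun h => ?_) (vp_ind _ _ _ _ fun h => ?_)
    · exact ⟨by linarith, by linarith [h.2]⟩
    · exact ⟨by linarith, by linarith [h.2]⟩
  · exact (vp_integrable _ _ _ _ (by fun_prop)).add_measure (vp_integrable _ _ _ _ (by fun_prop))
  · rw [integral_add_measure (vp_integrable _ _ _ (fun x => x) (by fun_prop))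
      (vp_integrable _ _ _ (fun x => x) (by fun_prop)), vp_int_lin _ _ _ (by linarith) hc0,
      vp_int_lin _ _ _ (by linarith) hd0]
    linear_combination (-a) * hcE - a * hdL + hdL2 / 2
  · rw [integral_add_measure (vp_integrable _ _ _ (fun x => x ^ 2) (by fun_prop))
      (vp_integrable _ _ _ (fun x => x ^ 2) (by fun_prop)), vp_int_sq _ _ _ (by linarith) hc0,
      vp_int_sq _ _ _ (by linarith) hd0]
    linear_combination (a ^ 2 + E ^ 2 / 3) * hcE + a ^ 2 * hdL + (- a + L / 3) * hdL2 + hE2 / 3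
  · refine lt_of_lt_of_le hL4 ?_
    rw [← ENNReal.toReal_ofReal (mul_nonneg hd0 (by linarith : 0 ≤ L - (k + a))), ← hIk]
    refine ENNReal.toReal_mono (measure_ne_top _ _) ?_
    rw [Measure.add_apply]
    exact le_add_self
end

section
/- For every k ≥ 2/√3 and every η > 0 there exists a real random variable X that is symmetric about 0, whose distribution is unimodal with mode 0, with E[X²] = 1, such that the probability that |X| ≥ k exceeds 4/(9k²) - η. (Hence the supremum of P[|X| ≥ k] over symmetric unimodal distributions with unit second moment about the mode equals 4/(9k²) for k ≥ 2/√3, i.e., Gauss's inequality is sharp.) -/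
open MeasureTheory

lemma aux_sq (b : ℝ) (hb : 0 < b) :
    Integrable (fun x : ℝ => x ^ 2) (volume.restrict (Set.Icc (-b) b)) ∧
    ∫ x in Set.Icc (-b) b, x ^ 2 = 2 * b ^ 3 / 3 := by
  constructor
  · exact (continuous_pow 2).continuousOn.integrableOn_Icc
  · rw [integral_Icc_eq_integral_Ioc, ← intervalIntegral.integral_of_le (by linarith),
      integral_pow]
    norm_num
    ring

lemma aux_map (b : ℝ) :
    (volume.restrict (Set.Icc (-b) b)).map (fun x : ℝ => -x)
      = volume.restrict (Set.Icc (-b) b) := by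
  ext s hs
  rw [Measure.map_apply measurable_neg hs, Measure.restrict_apply hs,
    Measure.restrict_apply (measurable_neg hs)]
  have h := Measure.measure_preimage_neg (volume : Measure ℝ) (s ∩ Set.Icc (-b) b)
  rw [← h]
  congr 1
  ext x
  simp only [Set.mem_inter_iff, Set.mem_preimage, Set.mem_Icc, Set.mem_neg]
  constructor
  · rintro ⟨h1, h2, h3⟩
    exact ⟨h1, by linarith, by linarith⟩
  · rintro ⟨h1, h2, h3⟩
    exact ⟨h1, by linarith, by linarith⟩

lemma aux_mono (b : ℝ) (A : ENNReal) :
    MonotoneOn ((Set.Icc (-b) b).indicator (fun _ => A)) (Set.Iic 0) ∧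
    AntitoneOn ((Set.Icc (-b) b).indicator (fun _ => A)) (Set.Ici 0) := by
  constructor
  · intro x hx y hy hxy
    simp only [Set.mem_Iic] at hx hy
    by_cases h : x ∈ Set.Icc (-b) b
    · have h' : y ∈ Set.Icc (-b) b := ⟨by linarith [h.1], by linarith [h.1]⟩
      simp [h, h']
    · rw [Set.indicator_of_notMem h]; exact zero_le
  · intro x hx y hy hxy
    simp only [Set.mem_Ici] at hx hy
    by_cases h : y ∈ Set.Icc (-b) b
    · have h' : x ∈ Set.Icc (-b) b := ⟨by linarith [h.2], by linarith [h.2]⟩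
      simp [h, h']
    · rw [Set.indicator_of_notMem h]; exact zero_le

/-- **Sharpness of Gauss's inequality.** For every `k ≥ 2/√3` and `η > 0` there is a real
random variable (given by its law `P`) symmetric about `0`, unimodal with mode `0`, with
`E[X²] = 1`, such that `P[|X| ≥ k] > 4/(9k²) - η`. -/
theorem gauss_inequality_sharp
    (k : ℝ) (hk : 2 / Real.sqrt 3 ≤ k) (η : ℝ) (hη : 0 < η) :
    ∃ P : Measure ℝ, IsProbabilityMeasure P ∧
      P.map (fun x => -x) = P ∧
      IsUnimodalWithMode P 0 ∧
      Integrable (fun x => x ^ 2) P ∧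
      (∫ x, x ^ 2 ∂P) = 1 ∧
      4 / (9 * k ^ 2) - η < (P {x | k ≤ |x|}).toReal := by
  have hk0 : 0 < k := lt_of_lt_of_le (by positivity) hk
  have hk2 : 4 / 3 ≤ k ^ 2 := by
    have h := pow_le_pow_left₀ (by positivity) hk 2
    rw [div_pow, Real.sq_sqrt (by norm_num)] at h
    linarith
  obtain ⟨c, hc0, hc1, hcη⟩ : ∃ c : ℝ, 0 < c ∧ c ≤ 1 ∧ c ≤ η :=
    ⟨min 1 η, lt_min one_pos hη, min_le_left _ _, min_le_right _ _⟩
  have hc2 : c ^ 2 ≤ c := by nlinarith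
  obtain ⟨b, hb⟩ : ∃ b, b = 3 * k / 2 := ⟨_, rfl⟩
  have hb0 : 0 < b := by rw [hb]; positivity
  have hb2 : 3 ≤ b ^ 2 := by rw [hb]; nlinarith
  have hd : 0 < b ^ 2 - c ^ 2 := by linarith
  obtain ⟨p, hp⟩ : ∃ p, p = (3 - c ^ 2) / (b ^ 2 - c ^ 2) := ⟨_, rfl⟩
  have hp0 : 0 ≤ p := by rw [hp]; apply div_nonneg <;> linarith
  have hp1 : p ≤ 1 := by rw [hp, div_le_one hd]; linarith
  have hpe : p * b ^ 2 + (1 - p) * c ^ 2 = 3 := by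
    rw [hp]; field_simp; ring
  obtain ⟨A, hA⟩ : ∃ A, A = p / (2 * b) := ⟨_, rfl⟩
  obtain ⟨B, hB⟩ : ∃ B, B = (1 - p) / (2 * c) := ⟨_, rfl⟩
  have hA0 : 0 ≤ A := by rw [hA]; positivity
  have hB0 : 0 ≤ B := by rw [hB]; exact div_nonneg (by linarith) (by positivity)
  have hAb : A * (2 * b) = p := by rw [hA]; field_simp
  have hBc : B * (2 * c) = 1 - p := by rw [hB]; field_simp
  obtain ⟨P, hP⟩ : ∃ P : Measure ℝ, P = ENNReal.ofReal A • volume.restrict (Set.Icc (-b) b)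
    + ENNReal.ofReal B • volume.restrict (Set.Icc (-c) c) := ⟨_, rfl⟩
  have hprob : IsProbabilityMeasure P := by
    constructor
    rw [hP]
    simp only [Measure.add_apply, Measure.smul_apply, smul_eq_mul, Measure.restrict_apply_univ,
      Real.volume_Icc]
    rw [← ENNReal.ofReal_mul hA0, ← ENNReal.ofReal_mul hB0,
      ← ENNReal.ofReal_add (mul_nonneg hA0 (by linarith)) (mul_nonneg hB0 (by linarith)),
      ENNReal.ofReal_eq_one]
    linarith
  obtain ⟨hbi, hbe⟩ := aux_sq b hb0
  obtain ⟨hci, hce⟩ := aux_sq c hc0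
  have hbi' := hbi.smul_measure (c := ENNReal.ofReal A) ENNReal.ofReal_ne_top
  have hci' := hci.smul_measure (c := ENNReal.ofReal B) ENNReal.ofReal_ne_top
  refine ⟨P, hprob, ?_, ?_, ?_, ?_, ?_⟩
  · rw [hP, Measure.map_add _ _ measurable_neg, Measure.map_smul, Measure.map_smul, aux_map,
      aux_map]
  · refine ⟨(Set.Icc (-b) b).indicator (fun _ => ENNReal.ofReal A) +
      (Set.Icc (-c) c).indicator (fun _ => ENNReal.ofReal B), ?_, ?_, ?_⟩
    · rw [withDensity_add_left (measurable_const.indicator measurableSet_Icc),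
        withDensity_indicator measurableSet_Icc, withDensity_indicator measurableSet_Icc,
        withDensity_const, withDensity_const, hP]
    · exact (aux_mono b _).1.add (aux_mono c _).1
    · exact (aux_mono b _).2.add (aux_mono c _).2
  · rw [hP]; exact hbi'.add_measure hci'
  · rw [hP, integral_add_measure hbi' hci', integral_smul_measure, integral_smul_measure, hbe, hce,
      ENNReal.toReal_ofReal hA0, ENNReal.toReal_ofReal hB0]
    simp only [smul_eq_mul]
    have : A * (2 * b ^ 3 / 3) + B * (2 * c ^ 3 / 3)
      = (A * (2 * b)) * b ^ 2 / 3 + (B * (2 * c)) * c ^ 2 / 3 := by ring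
    rw [this, hAb, hBc]
    linarith
  · have hsub : Set.Icc (-b) (-k) ∪ Set.Icc k b ⊆ {x | k ≤ |x|} ∩ Set.Icc (-b) b := by
      rintro x (⟨h1, h2⟩ | ⟨h1, h2⟩)
      · exact ⟨le_trans (by linarith) (neg_le_abs x), h1, by linarith⟩
      · exact ⟨le_trans h1 (le_abs_self x), by linarith, h2⟩
    have hdisj : Disjoint (Set.Icc (-b) (-k)) (Set.Icc k b) := by
      rw [Set.disjoint_left]
      rintro x ⟨_, h2⟩ ⟨h3, _⟩
      linarith
    have hvol : ENNReal.ofReal k ≤ volume.restrict (Set.Icc (-b) b) {x : ℝ | k ≤ |x|} := by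
      rw [Measure.restrict_apply' measurableSet_Icc]
      refine le_trans (le_of_eq ?_) (measure_mono hsub)
      rw [measure_union hdisj measurableSet_Icc, Real.volume_Icc, Real.volume_Icc,
        ← ENNReal.ofReal_add (by linarith) (by linarith)]
      congr 1
      rw [hb]; ring
    have hPk : ENNReal.ofReal (A * k) ≤ P {x : ℝ | k ≤ |x|} := by
      rw [hP, Measure.add_apply, Measure.smul_apply, smul_eq_mul, ENNReal.ofReal_mul hA0]
      exact le_trans (mul_le_mul_right hvol _) le_self_add
    have hreal := (ENNReal.ofReal_le_iff_le_toReal (measure_ne_top P _)).1 hPk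
    refine lt_of_lt_of_le ?_ hreal
    have hAk : A * k = p / 3 := by rw [← hAb, hb]; ring
    have h49 : 4 / (9 * k ^ 2) = 1 / b ^ 2 := by rw [hb]; field_simp; norm_num
    rw [hAk, h49, sub_lt_iff_lt_add, div_lt_iff₀ (by positivity)]
    nlinarith
end
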